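/- For every real a > 0, ∫₀^∞ e^{−a x} · (2/√(πx)) · Σ_{k=0}^∞ e^{−(2k+1)²/(4x)} dx = csch(√a)/√a, i.e. the function x ↦ (2/√(πx)) Σ_{k≥0} e^{−(2k+1)²/(4x)} on (0,∞) has Laplace transform a ↦ csch(√a)/√a. -/

import Mathlib

/-!
With `s = √a`, everything reduces to the Laplace transform of one heat-kernel term,
`∫₀^∞ e^{-s²x} · 2/√(πx) · e^{-c²/(4x)} dx = 2 e^{-sc}/s` for `c > 0`. This integrand has an explicit
antiderivative: since `(s√x + d/(2√x))² = s²x + d²/(4x) + sd`, the derivative of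
`e^{sd} ∫₀^{s√x + d/(2√x)} e^{-y²} dy` is `e^{-s²x - d²/(4x)} (s/(2√x) - d/(4x√x))`, and adding
the cases `d = c` and `d = -c` cancels the second summand. As `x → 0⁺` the upper limits tend to
`±∞` according to the sign of `d`, and as `x → ∞` they both tend to `+∞`, so the Gaussian integral
evaluates the boundary terms.

The terms are nonnegative and their integrals `2 e^{-(2k+1)s}/s` form a convergent geometric series
with sum `1/(s sinh s)`, so sum and integral may be interchanged.
-/

open Real MeasureTheory
open Filter Topology

/-- The unnormalised error function, an odd primitive of `exp (-y ^ 2)`. -/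
noncomputable def gaussPrimitive (t : ℝ) : ℝ := ∫ y in (0 : ℝ)..t, Real.exp (-y ^ 2)

lemma hasDerivAt_gaussPrimitive (t : ℝ) :
    HasDerivAt gaussPrimitive (Real.exp (-t ^ 2)) t := by
  have hc : Continuous fun y : ℝ => Real.exp (-y ^ 2) := by fun_prop
  exact intervalIntegral.integral_hasDerivAt_right (hc.intervalIntegrable _ _)
    (hc.stronglyMeasurableAtFilter _ _) hc.continuousAt

lemma gaussPrimitive_neg (t : ℝ) : gaussPrimitive (-t) = -gaussPrimitive t := by
  unfold gaussPrimitive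
  have h := intervalIntegral.integral_comp_neg (a := 0) (b := t) fun y : ℝ => Real.exp (-y ^ 2)
  simp only [even_two, Even.neg_pow, neg_zero] at h
  rw [h, intervalIntegral.integral_symm]

lemma tendsto_gaussPrimitive_atTop : Tendsto gaussPrimitive atTop (𝓝 (√π / 2)) := by
  have hi : IntegrableOn (fun y : ℝ => Real.exp (-y ^ 2)) (Set.Ioi 0) := by
    simpa using (integrable_exp_neg_mul_sq one_pos).integrableOn (s := Set.Ioi (0 : ℝ))
  have h := intervalIntegral_tendsto_integral_Ioi 0 hi tendsto_id
  have hg := integral_gaussian_Ioi 1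
  simp only [neg_mul, one_mul, div_one] at hg
  rwa [hg] at h

lemma tendsto_gaussPrimitive_atBot : Tendsto gaussPrimitive atBot (𝓝 (-(√π / 2))) := by
  refine (tendsto_gaussPrimitive_atTop.comp tendsto_neg_atBot_atTop).neg.congr fun t => ?_
  simp [gaussPrimitive_neg]

/-- Adding the cases `d = c` and `d = -c` cancels the term proportional to `d` and leaves a
multiple of the heat-kernel term, so the sum of these two functions is its antiderivative up to a
constant factor. -/
lemma hasDerivAt_exp_mul_gaussPrimitive (s d : ℝ) {x : ℝ} (hx : 0 < x) :
    HasDerivAt (fun x => Real.exp (s * d) * gaussPrimitive (s * √x + d / (2 * √x)))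
      (Real.exp (-s ^ 2 * x) * Real.exp (-d ^ 2 / (4 * x)) *
        (s / (2 * √x) - d / (4 * x * √x))) x := by
  have hr : 0 < √x := Real.sqrt_pos.2 hx
  have hxx : √x ^ 2 = x := Real.sq_sqrt hx.le
  have hs := Real.hasDerivAt_sqrt hx.ne'
  have hu : HasDerivAt (fun x => s * √x + d / (2 * √x))
      (s / (2 * √x) - d / (4 * x * √x)) x := by
    convert! (hs.const_mul s).add
      ((hasDerivAt_const x d).div (hs.const_mul 2) (by positivity)) using 1
    nth_rewrite 2 [← hxx]
    field_simp
    ring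
  convert! ((hasDerivAt_gaussPrimitive _).comp x hu).const_mul (Real.exp (s * d)) using 1
  rw [← mul_assoc, ← Real.exp_add, ← Real.exp_add]
  congr 2
  nth_rewrite 1 2 [← hxx]
  field_simp
  ring

lemma tendsto_sqrt_nhdsGT_zero : Tendsto Real.sqrt (𝓝[>] 0) (𝓝[>] 0) := by
  refine tendsto_nhdsWithin_iff.2 ⟨?_, ?_⟩
  · simpa using (Real.continuous_sqrt.tendsto 0).mono_left nhdsWithin_le_nhds
  · filter_upwards [self_mem_nhdsWithin] with x hx using Real.sqrt_pos.2 hx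

lemma tendsto_arg_atTop {s : ℝ} (hs : 0 < s) (d : ℝ) :
    Tendsto (fun x => s * √x + d / (2 * √x)) atTop atTop := by
  have h1 := Real.tendsto_sqrt_atTop.const_mul_atTop hs
  have h2 : Tendsto (fun x => d / (2 * √x)) atTop (𝓝 0) :=
    tendsto_const_nhds.div_atTop (Real.tendsto_sqrt_atTop.const_mul_atTop two_pos)
  exact h1.atTop_add h2

lemma tendsto_arg_nhdsGT_zero (s : ℝ) {d : ℝ} (hd : 0 < d) :
    Tendsto (fun x => s * √x + d / (2 * √x)) (𝓝[>] 0) atTop := by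
  have h0 := tendsto_sqrt_nhdsGT_zero
  have h1 : Tendsto (fun x => s * √x) (𝓝[>] 0) (𝓝 (s * 0)) :=
    (h0.mono_right nhdsWithin_le_nhds).const_mul s
  have h2 : Tendsto (fun x => d / 2 * (√x)⁻¹) (𝓝[>] 0) atTop :=
    (tendsto_inv_nhdsGT_zero.comp h0).const_mul_atTop (by positivity)
  refine (h1.add_atTop h2).congr fun x => ?_
  rw [← div_eq_mul_inv, div_div]

/-- The Laplace transform of a single heat-kernel term, with integrability. -/
lemma integral_heat_term {s c : ℝ} (hs : 0 < s) (hc : 0 < c) :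
    IntegrableOn (fun x => Real.exp (-s ^ 2 * x) * (2 / √(π * x)) * Real.exp (-c ^ 2 / (4 * x)))
        (Set.Ioi 0) ∧
      ∫ x in Set.Ioi (0 : ℝ),
        Real.exp (-s ^ 2 * x) * (2 / √(π * x)) * Real.exp (-c ^ 2 / (4 * x))
      = 2 * Real.exp (-(s * c)) / s := by
  have hpi : 0 < √π := Real.sqrt_pos.2 Real.pi_pos
  set F : ℝ → ℝ := fun x => 2 / (√π * s) *
    (Real.exp (s * c) * gaussPrimitive (s * √x + c / (2 * √x)) +
      Real.exp (s * -c) * gaussPrimitive (s * √x + -c / (2 * √x))) with hF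
  have hderiv : ∀ x ∈ Set.Ioi (0 : ℝ), HasDerivAt F
      (Real.exp (-s ^ 2 * x) * (2 / √(π * x)) * Real.exp (-c ^ 2 / (4 * x))) x := by
    intro x hx
    have hx : 0 < x := hx
    have hr : 0 < √x := Real.sqrt_pos.2 hx
    convert! ((hasDerivAt_exp_mul_gaussPrimitive s c hx).add
      (hasDerivAt_exp_mul_gaussPrimitive s (-c) hx)).const_mul (2 / (√π * s)) using 1
    rw [Real.sqrt_mul Real.pi_pos.le, neg_sq]
    field_simp
    ring
  have htop : Tendsto F atTop (𝓝 (2 / (√π * s) *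
      (Real.exp (s * c) * (√π / 2) + Real.exp (s * -c) * (√π / 2)))) :=
    (((tendsto_gaussPrimitive_atTop.comp (tendsto_arg_atTop hs c)).const_mul _).add
      ((tendsto_gaussPrimitive_atTop.comp (tendsto_arg_atTop hs (-c))).const_mul _)).const_mul _
  have hbot' : Tendsto (fun x => s * √x + -c / (2 * √x)) (𝓝[>] 0) atBot := by
    refine (tendsto_neg_atTop_atBot.comp (tendsto_arg_nhdsGT_zero (-s) hc)).congr fun x => ?_
    simp only [Function.comp_apply]
    ring
  have hzero : Tendsto F (𝓝[>] 0) (𝓝 (2 / (√π * s) *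
      (Real.exp (s * c) * (√π / 2) + Real.exp (s * -c) * (-(√π / 2))))) :=
    (((tendsto_gaussPrimitive_atTop.comp (tendsto_arg_nhdsGT_zero s hc)).const_mul _).add
      ((tendsto_gaussPrimitive_atBot.comp hbot').const_mul _)).const_mul _
  -- `F 0` is a junk value, coming from `c / 0 = 0`; it is replaced by the limit at `0⁺`.
  set L := 2 / (√π * s) * (Real.exp (s * c) * (√π / 2) + Real.exp (s * -c) * (-(√π / 2))) with hL
  have hcont : ContinuousWithinAt (Function.update F 0 L) (Set.Ici 0) 0 := by
    rw [continuousWithinAt_update_same, Set.Ici_sdiff_left]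
    exact hzero
  have hderiv' : ∀ x ∈ Set.Ioi (0 : ℝ), HasDerivAt (Function.update F 0 L)
      (Real.exp (-s ^ 2 * x) * (2 / √(π * x)) * Real.exp (-c ^ 2 / (4 * x))) x := by
    intro x hx
    refine (hderiv x hx).congr_of_eventuallyEq ?_
    filter_upwards [Ioi_mem_nhds hx] with y hy using Function.update_of_ne (ne_of_gt hy) _ _
  have htop' := htop.congr' (f₂ := Function.update F 0 L) (by
    filter_upwards [eventually_gt_atTop 0] with y hy
    exact (Function.update_of_ne (ne_of_gt hy) _ _).symm)
  have hpos : ∀ x ∈ Set.Ioi (0 : ℝ),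
      0 ≤ Real.exp (-s ^ 2 * x) * (2 / √(π * x)) * Real.exp (-c ^ 2 / (4 * x)) :=
    fun x _ => by positivity
  refine ⟨integrableOn_Ioi_deriv_of_nonneg hcont hderiv' hpos htop', ?_⟩
  rw [integral_Ioi_of_hasDerivAt_of_nonneg hcont hderiv' hpos htop', Function.update_self, hL,
    mul_neg s c]
  field_simp
  ring

lemma hasSum_exp_odd {s : ℝ} (hs : 0 < s) :
    HasSum (fun k : ℕ => 2 * Real.exp (-(s * (2 * (k : ℝ) + 1))) / s)
      ((Real.sinh s)⁻¹ / s) := by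
  have hlt : Real.exp (-(2 * s)) < 1 := by
    rw [← Real.exp_zero, Real.exp_lt_exp]; linarith
  have h := (hasSum_geometric_of_lt_one (Real.exp_pos _).le hlt).mul_left (2 * Real.exp (-s) / s)
  convert! h using 1
  · ext k
    rw [← Real.exp_nat_mul, div_mul_eq_mul_div, mul_assoc, ← Real.exp_add]
    ring_nf
  · have h1 : Real.exp (-(2 * s)) = Real.exp (-s) * Real.exp (-s) := by
      rw [← Real.exp_add]; ring_nf
    have h2 : Real.exp s * Real.exp (-s) = 1 := by rw [← Real.exp_add]; simp
    have h3 : Real.sinh s ≠ 0 := (Real.sinh_pos_iff.2 hs).ne'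
    have h4 : 1 - Real.exp (-(2 * s)) ≠ 0 := by linarith
    have h5 : 1 - Real.exp (-(2 * s)) = 2 * Real.exp (-s) * Real.sinh s := by
      rw [h1, Real.sinh_eq]; linear_combination -h2
    rw [h5]
    field_simp

/-- For every `a > 0`,
`∫₀^∞ e^{−ax} · (2/√(πx)) · ∑ₖ e^{−(2k+1)²/(4x)} dx = csch(√a)/√a`,
i.e. `x ↦ (2/√(πx)) ∑_{k≥0} e^{−(2k+1)²/(4x)}` has Laplace transform
`a ↦ csch(√a)/√a`. -/
theorem laplace_transform_theta_kernel (a : ℝ) (ha : 0 < a) :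
    ∫ x in Set.Ioi (0 : ℝ),
        Real.exp (-a * x) * (2 / Real.sqrt (π * x))
          * ∑' k : ℕ, Real.exp (-(2 * (k : ℝ) + 1) ^ 2 / (4 * x))
      = (Real.sinh (Real.sqrt a))⁻¹ / Real.sqrt a := by
  have hs : 0 < √a := Real.sqrt_pos.2 ha
  have hterm := fun k : ℕ =>
    integral_heat_term hs (show (0 : ℝ) < 2 * (k : ℝ) + 1 by positivity)
  rw [Real.sq_sqrt ha.le] at hterm
  have hsum := hasSum_exp_odd hs
  have key := hasSum_integral_of_summable_integral_norm (fun k => (hterm k).1) (by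
    refine hsum.summable.congr fun k => ?_
    rw [← (hterm k).2]
    refine integral_congr_ae (Eventually.of_forall fun x => ?_)
    exact (Real.norm_of_nonneg (by positivity)).symm)
  simp only [fun k => (hterm k).2, tsum_mul_left] at key
  exact key.unique hsum
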